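/- There is a universal constant C > 0 such that the following holds. For every 0 < ε < 1/2, every α > 0, every positive integer D, every integer m ≥ 2, and all vectors x_1, ..., x_m, y_1, ..., y_m ∈ ℝ^D with ‖x_i‖₂ ≤ √α and ‖y_i‖₂ ≤ √α for all i, if d is a positive integer with d ≥ C · log(m) / ε², then there exists a matrix M ∈ ℝ^{d×D} such that |⟨M x_i, M y_i⟩ − ⟨x_i, y_i⟩| ≤ ε α for all i = 1, ..., m. -/

import Mathlib

open scoped RealInnerProductSpace

/-!
Let the rows of `L`, scaled by `1 / √d`, be independent standard Gaussian vectors. For a unit vector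
`u` the variable `d * ‖L u‖ ^ 2` is chi-square with `d` degrees of freedom, and the Chernoff bound
gives `P(|‖L u‖ ^ 2 - 1| ≥ ε) ≤ 2 * exp (-d * ε ^ 2 / 16)`. A union bound over the `2 * m` vectors
`‖y i‖ • x i ± ‖x i‖ • y i` leaves a failure probability of at most
`4 * m * exp (-d * ε ^ 2 / 16) < 1`, and whenever all their norms are nearly preserved, polarization
transfers this to the inner products `⟪x i, y i⟫`.
-/

namespace JohnsonLindenstrauss

open MeasureTheory ProbabilityTheory Real

section ChiSquare

theorem inv_sqrt_one_sub_le_exp {u : ℝ} (hu : |u| ≤ 1 / 2) :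
    (√(1 - u))⁻¹ ≤ exp (u / 2 + u ^ 2) := by
  have hpos : 0 < 1 - u := by linarith [le_abs_self u]
  have hlog : -log (1 - u) ≤ u + 2 * u ^ 2 := by
    have hTaylor : |u + log (1 - u)| ≤ |u| ^ 2 / (1 - |u|) := by
      simpa using abs_log_sub_add_sum_range_le (hu.trans_lt one_half_lt_one) 1
    have hremainder : |u| ^ 2 / (1 - |u|) ≤ 2 * u ^ 2 := by
      rw [sq_abs, div_le_iff₀ (by linarith)]
      nlinarith [sq_nonneg u]
    linarith [neg_le_of_abs_le hTaylor]
  calc (√(1 - u))⁻¹ = exp (-log (1 - u) / 2) := by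
        rw [neg_div, exp_neg, ← log_sqrt hpos.le, exp_log (sqrt_pos.2 hpos)]
    _ ≤ exp (u / 2 + u ^ 2) := exp_le_exp.2 (by linarith)

/-- For `t ≥ 1 / 2` both sides are `0` by convention: the integral on the left diverges, and the
square root on the right vanishes. -/
theorem mgf_sq_gaussianReal (t : ℝ) :
    mgf (fun x ↦ x ^ 2) (gaussianReal 0 1) t = (√(1 - 2 * t))⁻¹ := by
  have hpdf (x : ℝ) : gaussianPDFReal 0 1 x • exp (t * x ^ 2) =
      (√(2 * π))⁻¹ * exp (-(1 / 2 - t) * x ^ 2) := by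
    rw [gaussianPDFReal, smul_eq_mul, mul_assoc, ← exp_add]
    congr 2
    · simp
    · simp only [NNReal.coe_one]
      ring
  rw [mgf, integral_gaussianReal_eq_integral_smul one_ne_zero]
  simp_rw [hpdf]
  rw [integral_const_mul, integral_gaussian, ← sqrt_inv, ← sqrt_mul (by positivity), ← sqrt_inv]
  congr 1
  rw [show 1 - 2 * t = 2 * (1 / 2 - t) by ring]
  field_simp

variable {Ω κ : Type*} {mΩ : MeasurableSpace Ω} {P : Measure Ω} [Fintype κ] {X : κ → Ω → ℝ}

theorem mgf_sum_sq_of_hasLaw_gaussianReal (hlaw : ∀ k, HasLaw (X k) (gaussianReal 0 1) P)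
    (hind : iIndepFun X P) (t : ℝ) :
    mgf (fun ω ↦ ∑ k, X k ω ^ 2) P t = (√(1 - 2 * t))⁻¹ ^ Fintype.card κ := by
  have hmgf (k : κ) : mgf (fun ω ↦ X k ω ^ 2) P t = (√(1 - 2 * t))⁻¹ := by
    rw [← mgf_sq_gaussianReal, ← (hlaw k).map_eq,
      mgf_map (hlaw k).aemeasurable (by fun_prop)]
    rfl
  have hsq : iIndepFun (fun k ω ↦ X k ω ^ 2) P :=
    hind.comp (fun _ x ↦ x ^ 2) fun _ ↦ by fun_prop
  have hsum := hsq.mgf_sum₀ (t := t) (fun k ↦ (hlaw k).aemeasurable.pow_const 2) Finset.univ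
  simpa [hmgf, Finset.sum_fn] using hsum

theorem exp_mul_mgf_sum_sq_le (hlaw : ∀ k, HasLaw (X k) (gaussianReal 0 1) P)
    (hind : iIndepFun X P) {t : ℝ} (ht : |t| ≤ 1 / 4) (a : ℝ) :
    exp (-t * (Fintype.card κ + a)) * mgf (fun ω ↦ ∑ k, X k ω ^ 2) P t ≤
      exp (4 * t ^ 2 * Fintype.card κ - t * a) := by
  have h2t : |2 * t| ≤ 1 / 2 := by
    rw [abs_mul, abs_two]
    linarith
  calc exp (-t * (Fintype.card κ + a)) * mgf (fun ω ↦ ∑ k, X k ω ^ 2) P t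
      = exp (-t * (Fintype.card κ + a)) * (√(1 - 2 * t))⁻¹ ^ Fintype.card κ := by
        rw [mgf_sum_sq_of_hasLaw_gaussianReal hlaw hind]
    _ ≤ exp (-t * (Fintype.card κ + a)) *
          exp (2 * t / 2 + (2 * t) ^ 2) ^ Fintype.card κ := by
        gcongr
        exact inv_sqrt_one_sub_le_exp h2t
    _ = exp (4 * t ^ 2 * Fintype.card κ - t * a) := by
        rw [← exp_nat_mul, ← exp_add]
        ring_nf

theorem integrable_exp_mul_sum_sq (hlaw : ∀ k, HasLaw (X k) (gaussianReal 0 1) P)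
    (hind : iIndepFun X P) {t : ℝ} (ht : t < 1 / 2) :
    Integrable (fun ω ↦ exp (t * ∑ k, X k ω ^ 2)) P := by
  have := hind.isProbabilityMeasure
  rw [← mgf_pos_iff, mgf_sum_sq_of_hasLaw_gaussianReal hlaw hind]
  have : 0 < 1 - 2 * t := by linarith
  positivity

theorem measureReal_le_abs_sum_sq_sub_card_le (hlaw : ∀ k, HasLaw (X k) (gaussianReal 0 1) P)
    (hind : iIndepFun X P) {e : ℝ} (he₀ : 0 ≤ e) (he₂ : e ≤ 2) :
    P.real {ω | Fintype.card κ * e ≤ |∑ k, X k ω ^ 2 - Fintype.card κ|} ≤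
      2 * exp (-(Fintype.card κ * e ^ 2 / 16)) := by
  have := hind.isProbabilityMeasure
  set n : ℝ := (Fintype.card κ : ℝ)
  set S : Ω → ℝ := fun ω ↦ ∑ k, X k ω ^ 2
  have he : |e / 8| ≤ 1 / 4 := by
    rw [abs_of_nonneg (by positivity)]
    linarith
  -- `|t| = e / 8` minimises the Chernoff exponent `4 * t ^ 2 * n - |t| * (n * e)`.
  have hupper : P.real {ω | n + n * e ≤ S ω} ≤ exp (-(n * e ^ 2 / 16)) :=
    calc P.real {ω | n + n * e ≤ S ω}
        ≤ exp (-(e / 8) * (n + n * e)) * mgf S P (e / 8) :=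
          measure_ge_le_exp_mul_mgf _ (by positivity)
            (integrable_exp_mul_sum_sq hlaw hind (by linarith))
      _ ≤ exp (4 * (e / 8) ^ 2 * n - e / 8 * (n * e)) :=
          exp_mul_mgf_sum_sq_le hlaw hind he _
      _ = exp (-(n * e ^ 2 / 16)) := by ring_nf
  have hlower : P.real {ω | S ω ≤ n + -(n * e)} ≤ exp (-(n * e ^ 2 / 16)) :=
    calc P.real {ω | S ω ≤ n + -(n * e)}
        ≤ exp (-(-(e / 8)) * (n + -(n * e))) * mgf S P (-(e / 8)) :=
          measure_le_le_exp_mul_mgf _ (by linarith)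
            (integrable_exp_mul_sum_sq hlaw hind (by linarith))
      _ ≤ exp (4 * (-(e / 8)) ^ 2 * n - -(e / 8) * -(n * e)) :=
          exp_mul_mgf_sum_sq_le hlaw hind (by rwa [abs_neg]) _
      _ = exp (-(n * e ^ 2 / 16)) := by ring_nf
  have hunion : {ω | n * e ≤ |S ω - n|} ⊆
      {ω | n + n * e ≤ S ω} ∪ {ω | S ω ≤ n + -(n * e)} := by
    intro ω hω
    rcases le_abs.1 (Set.mem_ofPred_eq ▸ hω) with h | h
    · exact Or.inl (le_sub_iff_add_le'.1 h)
    · exact Or.inr (by rw [Set.mem_ofPred_eq]; linarith)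
  calc P.real {ω | n * e ≤ |S ω - n|}
      ≤ P.real {ω | n + n * e ≤ S ω} + P.real {ω | S ω ≤ n + -(n * e)} :=
        (measureReal_mono hunion).trans (measureReal_union_le _ _)
    _ ≤ 2 * exp (-(n * e ^ 2 / 16)) := by linarith

end ChiSquare

section UnionBound

variable {Ω ι : Type*} {mΩ : MeasurableSpace Ω} {P : Measure Ω} [IsProbabilityMeasure P] [Fintype ι]

theorem exists_forall_notMem_of_card_mul_lt_one {A : ι → Set Ω} {p : ℝ}
    (hA : ∀ i, P.real (A i) ≤ p) (hp : Fintype.card ι * p < 1) : ∃ ω, ∀ i, ω ∉ A i := by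
  have hunion : P.real (⋃ i, A i) < 1 :=
    calc P.real (⋃ i, A i) ≤ ∑ i, P.real (A i) := measureReal_iUnion_fintype_le _
      _ ≤ ∑ _i : ι, p := Finset.sum_le_sum fun i _ ↦ hA i
      _ < 1 := by simpa using hp
  have hne : (⋃ i, A i) ≠ Set.univ := by
    intro huniv
    simp [huniv] at hunion
  simpa [Set.ne_univ_iff_exists_notMem] using hne

end UnionBound

section GaussianMap

variable {E κ : Type*} [NormedAddCommGroup E] [InnerProductSpace ℝ E] [Fintype κ]

/-- The linear map whose matrix has rows `g k`, scaled by `1 / √(card κ)` so that independent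
standard Gaussian rows preserve squared norms in expectation. -/
noncomputable def scaledRowMap (g : κ → E) : E →L[ℝ] EuclideanSpace ℝ κ :=
  (√(Fintype.card κ))⁻¹ •
    ((EuclideanSpace.equiv κ ℝ).symm.toContinuousLinearMap ∘L
      ContinuousLinearMap.pi fun k ↦ innerSL ℝ (g k))

theorem card_mul_norm_scaledRowMap_sq (g : κ → E) (v : E) :
    Fintype.card κ * ‖scaledRowMap g v‖ ^ 2 = ∑ k, ⟪g k, v⟫ ^ 2 := by
  have hcoord (k : κ) : scaledRowMap g v k = (√(Fintype.card κ))⁻¹ * ⟪g k, v⟫ := by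
    simp [scaledRowMap]
  cases isEmpty_or_nonempty κ
  · simp
  · simp_rw [EuclideanSpace.real_norm_sq_eq, hcoord, mul_pow, ← Finset.mul_sum]
    rw [inv_pow, sq_sqrt (Nat.cast_nonneg _), mul_inv_cancel_left₀ (by simp)]

variable [FiniteDimensional ℝ E] [MeasurableSpace E] [BorelSpace E]

theorem hasLaw_inner_stdGaussian {u : E} (hu : ‖u‖ = 1) :
    HasLaw (fun x ↦ ⟪x, u⟫) (gaussianReal 0 1) (stdGaussian E) where
  aemeasurable := by fun_prop
  map_eq := by
    have hdual : (fun x ↦ ⟪x, u⟫) = innerSL ℝ u := by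
      ext x
      simp [real_inner_comm]
    rw [hdual, IsGaussian.map_eq_gaussianReal, integral_strongDual_stdGaussian,
      variance_dual_stdGaussian, innerSL_apply_norm, hu]
    simp

theorem measureReal_le_abs_norm_scaledRowMap_sq_sub_one_le {u : E} (hu : ‖u‖ = 1) {e : ℝ}
    (he₀ : 0 ≤ e) (he₂ : e ≤ 2) :
    (Measure.pi fun _ : κ ↦ stdGaussian E).real {g | e ≤ |‖scaledRowMap g u‖ ^ 2 - 1|} ≤
      2 * exp (-(Fintype.card κ * e ^ 2 / 16)) := by
  have hlaw (k : κ) : HasLaw (fun g : κ → E ↦ ⟪g k, u⟫) (gaussianReal 0 1)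
      (Measure.pi fun _ : κ ↦ stdGaussian E) :=
    (hasLaw_inner_stdGaussian hu).fun_comp
      (measurePreserving_eval (fun _ : κ ↦ stdGaussian E) k).hasLaw
  have hind : iIndepFun (fun k (g : κ → E) ↦ ⟪g k, u⟫)
      (Measure.pi fun _ : κ ↦ stdGaussian E) :=
    iIndepFun_pi fun _ ↦ (hasLaw_inner_stdGaussian hu).aemeasurable
  refine (measureReal_mono fun g hg ↦ ?_).trans
    (measureReal_le_abs_sum_sq_sub_card_le hlaw hind he₀ he₂)
  rw [Set.mem_ofPred_eq, ← card_mul_norm_scaledRowMap_sq, ← mul_sub_one, abs_mul, Nat.abs_cast]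
  exact mul_le_mul_of_nonneg_left hg (Nat.cast_nonneg _)

theorem measureReal_lt_abs_norm_scaledRowMap_sq_sub_norm_sq_le (v : E) {e : ℝ}
    (he₀ : 0 ≤ e) (he₂ : e ≤ 2) :
    (Measure.pi fun _ : κ ↦ stdGaussian E).real
        {g | e * ‖v‖ ^ 2 < |‖scaledRowMap g v‖ ^ 2 - ‖v‖ ^ 2|} ≤
      2 * exp (-(Fintype.card κ * e ^ 2 / 16)) := by
  obtain rfl | hv := eq_or_ne v 0
  · simpa using (exp_pos _).le
  set u := ‖v‖⁻¹ • v
  have hu : ‖u‖ = 1 := norm_smul_inv_norm hv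
  have hvu : v = ‖v‖ • u := by simp [u, hv]
  refine (measureReal_mono fun g hg ↦ ?_).trans
    (measureReal_le_abs_norm_scaledRowMap_sq_sub_one_le hu he₀ he₂)
  have hscale : ‖scaledRowMap g v‖ ^ 2 = ‖v‖ ^ 2 * ‖scaledRowMap g u‖ ^ 2 := by
    conv_lhs => rw [hvu]
    rw [map_smul, norm_smul, norm_norm, mul_pow]
  rw [Set.mem_ofPred_eq, hscale, ← mul_sub_one, abs_mul, abs_of_nonneg (sq_nonneg ‖v‖),
    mul_comm e] at hg
  exact (lt_of_mul_lt_mul_left hg (sq_nonneg _)).le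

end GaussianMap

section NormPreservation

variable {E ι κ : Type*} [NormedAddCommGroup E] [InnerProductSpace ℝ E] [Fintype ι] [Fintype κ]
  {e : ℝ}

theorem exists_abs_norm_map_sq_sub_norm_sq_le_of_finiteDimensional [FiniteDimensional ℝ E]
    (v : ι → E) (he₀ : 0 ≤ e) (he₂ : e ≤ 2)
    (hcard : 2 * Fintype.card ι < exp (Fintype.card κ * e ^ 2 / 16)) :
    ∃ L : E →L[ℝ] EuclideanSpace ℝ κ, ∀ i, |‖L (v i)‖ ^ 2 - ‖v i‖ ^ 2| ≤ e * ‖v i‖ ^ 2 := by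
  borelize E
  obtain ⟨g, hg⟩ := exists_forall_notMem_of_card_mul_lt_one
    (P := Measure.pi fun _ : κ ↦ stdGaussian E)
    (fun i ↦ measureReal_lt_abs_norm_scaledRowMap_sq_sub_norm_sq_le (v i) he₀ he₂) <| by
      rw [exp_neg, ← mul_assoc, mul_comm _ 2, ← div_eq_mul_inv, div_lt_one (exp_pos _)]
      exact hcard
  exact ⟨scaledRowMap g, fun i ↦ not_lt.1 (hg i)⟩

theorem exists_abs_norm_map_sq_sub_norm_sq_le (v : ι → E) (he₀ : 0 ≤ e) (he₂ : e ≤ 2)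
    (hcard : 2 * Fintype.card ι < exp (Fintype.card κ * e ^ 2 / 16)) :
    ∃ L : E →L[ℝ] EuclideanSpace ℝ κ, ∀ i, |‖L (v i)‖ ^ 2 - ‖v i‖ ^ 2| ≤ e * ‖v i‖ ^ 2 := by
  let V := Submodule.span ℝ (Set.range v)
  have hfin : FiniteDimensional ℝ V := .span_of_finite ℝ (Set.finite_range v)
  let w (i : ι) : V := ⟨v i, Submodule.subset_span ⟨i, rfl⟩⟩
  obtain ⟨L, hL⟩ := exists_abs_norm_map_sq_sub_norm_sq_le_of_finiteDimensional w he₀ he₂ hcard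
  refine ⟨L ∘L V.orthogonalProjectionOnto, fun i ↦ ?_⟩
  have hproj : V.orthogonalProjectionOnto (v i) = w i :=
    Submodule.orthogonalProjectionOnto_mem_subspace_eq_self (w i)
  simpa [hproj] using hL i

end NormPreservation

section Polarization

variable {E F : Type*} [NormedAddCommGroup E] [InnerProductSpace ℝ E] [NormedAddCommGroup F]
  [InnerProductSpace ℝ F] {e : ℝ}

theorem abs_inner_map_sub_inner_le_of_add_of_sub (L : E →ₗ[ℝ] F) {x y : E}
    (hadd : |‖L (x + y)‖ ^ 2 - ‖x + y‖ ^ 2| ≤ e * ‖x + y‖ ^ 2)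
    (hsub : |‖L (x - y)‖ ^ 2 - ‖x - y‖ ^ 2| ≤ e * ‖x - y‖ ^ 2) :
    |⟪L x, L y⟫ - ⟪x, y⟫| ≤ e * ((‖x‖ ^ 2 + ‖y‖ ^ 2) / 2) := by
  simp only [map_add, map_sub, norm_add_sq_real, norm_sub_sq_real, abs_le] at hadd hsub ⊢
  constructor <;> linarith

/-- The weights give the two summands equal norms, so that polarization bounds the error by the
product of `‖x‖` and `‖y‖` instead of their mean square. -/
theorem abs_inner_map_sub_inner_le_mul_norm_mul_norm (L : E →ₗ[ℝ] F) {x y : E}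
    (hadd : |‖L (‖y‖ • x + ‖x‖ • y)‖ ^ 2 - ‖‖y‖ • x + ‖x‖ • y‖ ^ 2| ≤
      e * ‖‖y‖ • x + ‖x‖ • y‖ ^ 2)
    (hsub : |‖L (‖y‖ • x - ‖x‖ • y)‖ ^ 2 - ‖‖y‖ • x - ‖x‖ • y‖ ^ 2| ≤
      e * ‖‖y‖ • x - ‖x‖ • y‖ ^ 2) :
    |⟪L x, L y⟫ - ⟪x, y⟫| ≤ e * (‖x‖ * ‖y‖) := by
  obtain rfl | hx := eq_or_ne x 0
  · simp
  obtain rfl | hy := eq_or_ne y 0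
  · simp
  have hpos : 0 < ‖x‖ * ‖y‖ := by positivity
  have hpolar := abs_inner_map_sub_inner_le_of_add_of_sub L hadd hsub
  simp only [map_smul, real_inner_smul_left, real_inner_smul_right, norm_smul, norm_norm] at hpolar
  refine le_of_mul_le_mul_left ?_ hpos
  calc ‖x‖ * ‖y‖ * |⟪L x, L y⟫ - ⟪x, y⟫|
      = |‖x‖ * ‖y‖ * (⟪L x, L y⟫ - ⟪x, y⟫)| := by rw [abs_mul, abs_of_pos hpos]
    _ = |‖x‖ * (‖y‖ * ⟪L x, L y⟫) - ‖x‖ * (‖y‖ * ⟪x, y⟫)| := by ring_nf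
    _ ≤ e * (((‖y‖ * ‖x‖) ^ 2 + (‖x‖ * ‖y‖) ^ 2) / 2) := hpolar
    _ = ‖x‖ * ‖y‖ * (e * (‖x‖ * ‖y‖)) := by ring

end Polarization

theorem four_mul_lt_exp_of_log_div_sq_le {m n ε : ℝ} (hm : 2 ≤ m) (hε : 0 < ε)
    (h : 64 * log m / ε ^ 2 ≤ n) : 4 * m < exp (n * ε ^ 2 / 16) := by
  rw [div_le_iff₀ (by positivity)] at h
  calc 4 * m < 2 ^ 3 * m := by linarith
    _ ≤ m ^ 3 * m := by gcongr
    _ = exp (4 * log m) := by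
      rw [show 4 * log m = ((4 : ℕ) : ℝ) * log m by norm_num, exp_nat_mul, exp_log (by linarith)]
      ring
    _ ≤ exp (n * ε ^ 2 / 16) := exp_le_exp.2 (by linarith)

end JohnsonLindenstrauss

open JohnsonLindenstrauss in
theorem jl_dot_products_general {E ι κ : Type*} [NormedAddCommGroup E] [InnerProductSpace ℝ E]
    [Fintype ι] [Nontrivial ι] [Fintype κ] (x y : ι → E) {ε : ℝ} (hε : 0 < ε)
    (hκ : 64 * Real.log (Fintype.card ι) / ε ^ 2 ≤ Fintype.card κ) :
    ∃ L : E →L[ℝ] EuclideanSpace ℝ κ,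
      ∀ i, |⟪L (x i), L (y i)⟫ - ⟪x i, y i⟫| ≤ ε * (‖x i‖ * ‖y i‖) := by
  obtain hε₁ | hε₁ := le_total 1 ε
  · refine ⟨0, fun i ↦ ?_⟩
    simpa using (abs_real_inner_le_norm (x i) (y i)).trans
      (le_mul_of_one_le_left (by positivity) hε₁)
  have hcard : (2 : ℝ) ≤ Fintype.card ι := by exact_mod_cast Fintype.one_lt_card (α := ι)
  obtain ⟨L, hL⟩ := exists_abs_norm_map_sq_sub_norm_sq_le (κ := κ)
    (Sum.elim (fun i ↦ ‖y i‖ • x i + ‖x i‖ • y i) (fun i ↦ ‖y i‖ • x i - ‖x i‖ • y i))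
    hε.le (by linarith) <| by
      have := four_mul_lt_exp_of_log_div_sq_le hcard hε hκ
      rw [Fintype.card_sum, Nat.cast_add]
      linarith
  exact ⟨L, fun i ↦ abs_inner_map_sub_inner_le_mul_norm_mul_norm L.toLinearMap
    (hL (Sum.inl i)) (hL (Sum.inr i))⟩

/-- Johnson–Lindenstrauss for dot products: there is a universal constant
`C > 0` such that for every `0 < ε < 1/2`, `α > 0`, dimension `D ≥ 1`, and `m ≥ 2` pairs of
vectors of norm at most `√α`, whenever `d ≥ C * log m / ε²` there is a `d × D` matrix `M`
preserving all `m` inner products `⟨x i, y i⟩` up to additive error `ε * α`. -/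
theorem jl_dot_products : ∃ C : ℝ, 0 < C ∧
    ∀ (ε α : ℝ), 0 < ε → ε < 1 / 2 → 0 < α →
    ∀ (D : ℕ), 0 < D → ∀ (m : ℕ), 2 ≤ m →
    ∀ (x y : Fin m → EuclideanSpace ℝ (Fin D)),
    (∀ i, ‖x i‖ ≤ Real.sqrt α) → (∀ i, ‖y i‖ ≤ Real.sqrt α) →
    ∀ (d : ℕ), 0 < d → C * Real.log m / ε ^ 2 ≤ (d : ℝ) →
    ∃ M : Matrix (Fin d) (Fin D) ℝ,
      ∀ i, |⟪Matrix.toEuclideanLin M (x i), Matrix.toEuclideanLin M (y i)⟫ - ⟪x i, y i⟫|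
        ≤ ε * α := by
  refine ⟨64, by norm_num, fun ε α hε _ hα D _ m hm x y hx hy d _ hd ↦ ?_⟩
  have : Nontrivial (Fin m) := Fin.nontrivial_iff_two_le.2 hm
  obtain ⟨L, hL⟩ := jl_dot_products_general (κ := Fin d) x y hε (by simpa using hd)
  refine ⟨Matrix.toEuclideanLin.symm L.toLinearMap, fun i ↦ ?_⟩
  have hnorm : ‖x i‖ * ‖y i‖ ≤ α :=
    (mul_le_mul (hx i) (hy i) (norm_nonneg _) (Real.sqrt_nonneg _)).trans_eq
      (Real.mul_self_sqrt hα.le)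
  simpa using (hL i).trans (mul_le_mul_of_nonneg_left hnorm hε.le)
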